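/- Let X ⊂ ℝⁿ be an 𝒮^m-measurable set with 𝒮^m(X) < ∞ (where 𝒮^m denotes m-dimensional Hausdorff spherical measure), and let f : X → ℝ be 𝒮^m-measurable, non-negative, and bounded. Let E be a fixed M-dimensional affine subspace of ℝⁿ with 0 ≤ M ≤ n−1, and for t ≥ 0 let X_t denote the set of points of X at distance exactly t from E. Then ∫₀^∞ ∫_{X_t} f dℋ^{m−1}_spherical dt ≤ ∫_X f d𝒮^m. -/

import Mathlib

open MeasureTheory Metric Set
open scoped Classical ENNReal

/-- The pre-measure for spherical Hausdorff measure: a covering set is charged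
`(diam s)^d` if it is a closed ball, and `∞` otherwise (forcing covers by balls). -/
noncomputable def sphericalPre (n d : ℕ) : Set (EuclideanSpace ℝ (Fin n)) → ℝ≥0∞ :=
  fun s =>
    if ∃ (x : EuclideanSpace ℝ (Fin n)) (r : ℝ), s = Metric.closedBall x r then
      EMetric.diam s ^ d
    else ⊤

/-- The normalized `d`-dimensional Hausdorff spherical measure `𝒮^d` on `ℝⁿ`:
the Carathéodory–metric measure generated by covers by closed balls charged
`(diam)^d`, normalized by `α_d / 2^d` where `α_d` is the volume of the unit
`d`-ball. -/
noncomputable def sphericalMeasure (n d : ℕ) : Measure (EuclideanSpace ℝ (Fin n)) :=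
  (MeasureTheory.volume (Metric.ball (0 : EuclideanSpace ℝ (Fin d)) 1) / 2 ^ d) •
    Measure.mkMetric' (sphericalPre n d)


theorem slice_geom {n : ℕ} (E : AffineSubspace ℝ (EuclideanSpace ℝ (Fin n)))
    (hE : (E : Set (EuclideanSpace ℝ (Fin n))).Nonempty) (x : EuclideanSpace ℝ (Fin n))
    (t : ℝ) (hx : 0 < infDist x (E : Set (EuclideanSpace ℝ (Fin n)))) (K : ℝ) (hK : 1 ≤ K)
    (htK : t ≤ K * infDist x (E : Set (EuclideanSpace ℝ (Fin n)))) :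
    ∃ c : EuclideanSpace ℝ (Fin n), ∀ y : EuclideanSpace ℝ (Fin n),
      infDist y (E : Set (EuclideanSpace ℝ (Fin n))) = t →
      dist y c ^ 2 ≤ K * (dist y x ^ 2
        - (t - infDist x (E : Set (EuclideanSpace ℝ (Fin n)))) ^ 2) := by
  have : Nonempty E := hE.to_subtype
  set t0 := infDist x (E : Set (EuclideanSpace ℝ (Fin n))) with ht0
  let p : EuclideanSpace ℝ (Fin n) := EuclideanGeometry.orthogonalProjection E x
  refine ⟨p + (t / t0) • (x - p), fun y hy => ?_⟩
  let q : EuclideanSpace ℝ (Fin n) := EuclideanGeometry.orthogonalProjection E y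
  have hu : ‖x - p‖ = t0 := by
    rw [← dist_eq_norm, dist_comm, ht0, ← EuclideanGeometry.dist_orthogonalProjection_eq_infDist]
    first | rfl | exact dist_comm _ _
  have hv : ‖y - q‖ = t := by
    rw [← dist_eq_norm, dist_comm, ← hy, ← EuclideanGeometry.dist_orthogonalProjection_eq_infDist]
    first | rfl | exact dist_comm _ _
  have hw : q - p ∈ E.direction := by
    have := AffineSubspace.vsub_mem_direction (EuclideanGeometry.orthogonalProjection E y).2
      (EuclideanGeometry.orthogonalProjection E x).2
    simpa using this
  have hxu : inner ℝ (q - p) (x - p) = 0 :=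
    EuclideanGeometry.vsub_orthogonalProjection_mem_direction_orthogonal E x _ hw
  have hyv : inner ℝ (q - p) (y - q) = 0 :=
    EuclideanGeometry.vsub_orthogonalProjection_mem_direction_orthogonal E y _ hw
  generalize hU : x - p = u at *
  generalize hV : y - q = v at *
  generalize hW : q - p = w at *
  have e1 : y - (p + (t / t0) • u) = w + (v - (t / t0) • u) := by
    rw [← hV, ← hW]; abel
  have e2 : y - x = w + (v - u) := by
    rw [← hV, ← hW, ← hU]; abel
  have ht : 0 ≤ t := hv ▸ norm_nonneg _
  have hI : inner ℝ v u ≤ t * t0 := by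
    rw [← hu, ← hv]; exact real_inner_le_norm v u
  rw [dist_eq_norm, dist_eq_norm, e1, e2, norm_add_sq_real, norm_add_sq_real, norm_sub_sq_real,
    norm_sub_sq_real, inner_sub_right, inner_sub_right, inner_smul_right, inner_smul_right,
    hxu, hyv, norm_smul, hu, hv]
  generalize inner ℝ v u = I at *
  obtain ⟨l, hl⟩ : ∃ l, l = t / t0 := ⟨_, rfl⟩
  have hlt : t = l * t0 := by rw [hl]; field_simp
  have hl0 : 0 ≤ l := by rw [hl]; positivity
  have hlK : l ≤ K := by rw [hl, div_le_iff₀ hx]; exact htK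
  rw [← hl, Real.norm_of_nonneg hl0]
  rw [← hlt]
  have h1 : 0 ≤ (K - l) * (t * t0 - I) := mul_nonneg (by linarith) (by linarith)
  have h2 : 0 ≤ (K - 1) * ‖w‖ ^ 2 := mul_nonneg (by linarith) (by positivity)
  have h3 : l * (t * t0) = t ^ 2 := by rw [hlt]; ring
  nlinarith

theorem vol_slice (k : ℕ) (r : ℝ) (hr : 0 ≤ r) :
    ∫⁻ s : ℝ, (if |s| ≤ r then
      volume (ball (0 : EuclideanSpace ℝ (Fin k)) 1) * ENNReal.ofReal (√(r ^ 2 - s ^ 2)) ^ k else 0)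
    = volume (ball (0 : EuclideanSpace ℝ (Fin (k + 1))) 1) * ENNReal.ofReal r ^ (k + 1) := by
  let W := WithLp 2 (ℝ × EuclideanSpace ℝ (Fin k))
  have hfin : Module.finrank ℝ (EuclideanSpace ℝ (Fin (k+1))) = Module.finrank ℝ W := by
    rw [LinearEquiv.finrank_eq (WithLp.linearEquiv 2 ℝ (ℝ × EuclideanSpace ℝ (Fin k)))]
    simp [Module.finrank_prod, add_comm]
  let e : EuclideanSpace ℝ (Fin (k+1)) ≃ₗᵢ[ℝ] W := 
    ((stdOrthonormalBasis ℝ W).reindex (finCongr (by rw [← hfin, finrank_euclideanSpace_fin]))).repr.symm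
  have h1 : volume (closedBall (0 : EuclideanSpace ℝ (Fin (k + 1))) r)
      = volume (closedBall (0 : W) r) := by
    rw [← e.measurePreserving.measure_preimage measurableSet_closedBall.nullMeasurableSet]
    congr 1
    rw [e.preimage_closedBall]; simp
  have h2 : volume (closedBall (0 : W) r) = volume (WithLp.toLp 2 ⁻¹' (closedBall (0 : W) r)) :=
    ((WithLp.volume_preserving_toLp ℝ (EuclideanSpace ℝ (Fin k))).measure_preimage
      measurableSet_closedBall.nullMeasurableSet).symm
  have hms : MeasurableSet (WithLp.toLp 2 ⁻¹' (closedBall (0 : W) r)) :=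
    (WithLp.volume_preserving_toLp ℝ (EuclideanSpace ℝ (Fin k))).measurable
      measurableSet_closedBall
  rw [Measure.addHaar_closedBall _ _ hr, finrank_euclideanSpace_fin] at h1
  rw [mul_comm, ← ENNReal.ofReal_pow hr, h1, h2, Measure.volume_eq_prod, Measure.prod_apply hms]
  refine lintegral_congr fun s => ?_
  have key : ∀ w : EuclideanSpace ℝ (Fin k),
      w ∈ Prod.mk s ⁻¹' (WithLp.toLp 2 ⁻¹' (closedBall (0 : W) r)) ↔ s ^ 2 + ‖w‖ ^ 2 ≤ r ^ 2 := by
    intro w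
    simp only [mem_preimage, mem_closedBall, dist_zero_right]
    rw [← abs_of_nonneg (norm_nonneg _), ← abs_of_nonneg hr, ← sq_le_sq, abs_of_nonneg hr,
      WithLp.prod_norm_sq_eq_of_L2]
    simp
  split_ifs with hs
  · have hs2 : s ^ 2 ≤ r ^ 2 := sq_le_sq' (abs_le.1 hs).1 (abs_le.1 hs).2
    have : Prod.mk s ⁻¹' (WithLp.toLp 2 ⁻¹' (closedBall (0 : W) r))
      = closedBall (0 : EuclideanSpace ℝ (Fin k)) (√(r ^ 2 - s ^ 2)) := by
      ext w
      rw [key, mem_closedBall, dist_zero_right, Real.le_sqrt (norm_nonneg _) (by linarith)]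
      constructor <;> intro h <;> linarith
    rw [this, Measure.addHaar_closedBall _ _ (Real.sqrt_nonneg _), finrank_euclideanSpace_fin,
      ENNReal.ofReal_pow (Real.sqrt_nonneg _), mul_comm]
  · have : Prod.mk s ⁻¹' (WithLp.toLp 2 ⁻¹' (closedBall (0 : W) r)) = ∅ := by
      ext w
      rw [key]
      simp only [mem_empty_iff_false, iff_false, not_le]
      have := sq_lt_sq.2 (by rw [abs_of_nonneg hr]; exact not_le.1 hs : |r| < |s|)
      nlinarith [sq_nonneg ‖w‖]
    rw [this, measure_empty]

/-- The `d`-th power of the diameter of the slice at height `t` of a ball of radius `r` whose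
centre has height `t0`. -/
noncomputable def sliceProfile (d : ℕ) (t0 r t : ℝ) : ℝ≥0∞ :=
  if |t - t0| ≤ r then ENNReal.ofReal (2 * √(r ^ 2 - (t - t0) ^ 2)) ^ d else 0

theorem measurable_sliceProfile (d : ℕ) (t0 r : ℝ) : Measurable (sliceProfile d t0 r) := by
  unfold sliceProfile
  refine Measurable.ite (measurableSet_le (by fun_prop) (by fun_prop)) (by fun_prop) (by fun_prop)

theorem lintegral_sliceProfile (k : ℕ) (t0 r : ℝ) (hr : 0 ≤ r) :
    volume (ball (0 : EuclideanSpace ℝ (Fin k)) 1) / 2 ^ k * ∫⁻ t, sliceProfile k t0 r t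
      = volume (ball (0 : EuclideanSpace ℝ (Fin (k + 1))) 1) / 2 ^ (k + 1)
        * ENNReal.ofReal (2 * r) ^ (k + 1) := by
  have h2 : ∀ j : ℕ, (2 : ℝ≥0∞) ^ j ≠ 0 := fun j => by positivity
  have h2' : ∀ j : ℕ, (2 : ℝ≥0∞) ^ j ≠ ⊤ := fun j => by finiteness
  have hmul : ∀ (j : ℕ) (a b : ℝ≥0∞), a / 2 ^ j * (2 ^ j * b) = a * b := by
    intro j a b
    rw [← mul_assoc, ENNReal.div_mul_cancel (h2 j) (h2' j)]
  rw [ENNReal.ofReal_mul (by norm_num), mul_pow, ENNReal.ofReal_ofNat, hmul, ← vol_slice k r hr,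
    ← lintegral_const_mul _ (measurable_sliceProfile k t0 r)]
  rw [← lintegral_sub_right_eq_self
    (fun s : ℝ => if |s| ≤ r then volume (ball (0 : EuclideanSpace ℝ (Fin k)) 1) *
      ENNReal.ofReal (√(r ^ 2 - s ^ 2)) ^ k else 0) t0]
  refine lintegral_congr fun t => ?_
  unfold sliceProfile
  split_ifs
  · rw [ENNReal.ofReal_mul (by norm_num), mul_pow, ENNReal.ofReal_ofNat, hmul]
  · simp

theorem slice_one {n : ℕ} [Nonempty (Fin n)] (k : ℕ)
    (E : AffineSubspace ℝ (EuclideanSpace ℝ (Fin n)))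
    (hE : (E : Set (EuclideanSpace ℝ (Fin n))).Nonempty) (s : Set (EuclideanSpace ℝ (Fin n)))
    (hs : s.Nonempty) (hpre : sphericalPre n (k + 1) s ≠ ⊤) (ε : ℝ) (hε : 0 < ε)
    (hd : ediam s ≤ ENNReal.ofReal ε) :
    ∃ φ : ℝ → ℝ≥0∞, Measurable φ ∧
      volume (ball (0 : EuclideanSpace ℝ (Fin k)) 1) / 2 ^ k * ∫⁻ t, φ t
        ≤ volume (ball (0 : EuclideanSpace ℝ (Fin (k + 1))) 1) / 2 ^ (k + 1)
          * sphericalPre n (k + 1) s ∧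
      ∀ t L : ℝ, ε < t → 1 ≤ L → L ≤ 2 → t ≤ L ^ 2 * (t - ε) →
        OuterMeasure.mkMetric'.pre (sphericalPre n k) (ENNReal.ofReal (4 * ε))
          (s ∩ {y | infDist y (E : Set (EuclideanSpace ℝ (Fin n))) = t})
          ≤ ENNReal.ofReal L ^ k * φ t := by
  have hball : ∃ (x : EuclideanSpace ℝ (Fin n)) (r : ℝ), s = Metric.closedBall x r := by
    by_contra h
    exact hpre (by simp [sphericalPre, h])
  obtain ⟨x, r, rfl⟩ := hball
  have hr : 0 ≤ r := nonempty_closedBall.1 hs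
  have hdiam : ediam (closedBall x r) = ENNReal.ofReal (2 * r) := by
    rw [← Metric.diam_closedBall_eq x hr, Metric.diam, ENNReal.ofReal_toReal]
    exact isBounded_closedBall.ediam_ne_top
  have hsp : sphericalPre n (k + 1) (closedBall x r) = ENNReal.ofReal (2 * r) ^ (k + 1) := by
    unfold sphericalPre
    rw [if_pos ⟨x, r, rfl⟩, ← hdiam]
    rfl
  have hrε : 2 * r ≤ ε := by
    rw [hdiam] at hd
    exact (ENNReal.ofReal_le_ofReal_iff hε.le).1 hd
  set t0 := infDist x (E : Set (EuclideanSpace ℝ (Fin n))) with ht0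
  refine ⟨sliceProfile k t0 r, measurable_sliceProfile k t0 r, ?_, ?_⟩
  · rw [lintegral_sliceProfile k t0 r hr, hsp]
  intro t L ht hL hL2 htL
  by_cases htr : |t - t0| ≤ r
  · have h0 : t - ε ≤ t0 := by linarith [(abs_le.1 htr).2]
    have hpos : 0 < t0 := by linarith
    obtain ⟨c, hc⟩ := slice_geom E hE x t hpos (L ^ 2) (one_le_pow₀ hL)
      (htL.trans (by gcongr))
    set ρ := √(r ^ 2 - (t - t0) ^ 2) with hρ
    have hq : 0 ≤ r ^ 2 - (t - t0) ^ 2 := by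
      have := sq_le_sq' (abs_le.1 htr).1 (abs_le.1 htr).2
      linarith
    have hρr : ρ ≤ r := by
      rw [hρ]
      apply Real.sqrt_le_iff.2
      exact ⟨hr, by nlinarith [sq_nonneg (t - t0)]⟩
    have hρ0 : 0 ≤ ρ := Real.sqrt_nonneg _
    have hsub : closedBall x r ∩ {y | infDist y (E : Set (EuclideanSpace ℝ (Fin n))) = t}
        ⊆ closedBall c (L * ρ) := by
      rintro y ⟨hy, hyt⟩
      have h1 := hc y hyt
      have h2 : dist y x ^ 2 ≤ r ^ 2 := by
        have := mem_closedBall.1 hy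
        gcongr
      rw [mem_closedBall]
      refine le_of_sq_le_sq ?_ (by positivity)
      rw [mul_pow, hρ, Real.sq_sqrt hq]
      refine h1.trans ?_
      rw [← ht0]
      gcongr
    have hdc : ediam (closedBall c (L * ρ)) = ENNReal.ofReal (L * (2 * ρ)) := by
      rw [show L * (2 * ρ) = 2 * (L * ρ) by ring,
        ← Metric.diam_closedBall_eq c (by positivity : 0 ≤ L * ρ), Metric.diam,
        ENNReal.ofReal_toReal]
      exact isBounded_closedBall.ediam_ne_top
    refine (measure_mono hsub).trans ?_
    refine (OuterMeasure.mkMetric'.pre_le ?_).trans ?_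
    · rw [hdc]
      apply ENNReal.ofReal_le_ofReal
      nlinarith
    · unfold sphericalPre sliceProfile
      rw [if_pos ⟨c, L * ρ, rfl⟩, if_pos htr, ← mul_pow, ← ENNReal.ofReal_mul (by linarith), ← hρ,
        ← hdc]
      exact le_rfl
  · have : closedBall x r ∩ {y | infDist y (E : Set (EuclideanSpace ℝ (Fin n))) = t} = ∅ := by
      ext y
      simp only [mem_inter_iff, mem_closedBall, mem_ofPred_eq, mem_empty_iff_false, iff_false,
        not_and]
      rintro hy rfl
      apply htr
      refine le_trans ?_ hy
      have h1 := infDist_le_infDist_add_dist (s := (E : Set (EuclideanSpace ℝ (Fin n)))) (x := x)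
        (y := y)
      have h2 := infDist_le_infDist_add_dist (s := (E : Set (EuclideanSpace ℝ (Fin n)))) (x := y)
        (y := x)
      rw [dist_comm x y] at h1
      rw [abs_le]
      constructor <;> linarith
    rw [this]
    simp

theorem slice_cover {n : ℕ} [Nonempty (Fin n)] (k : ℕ)
    (E : AffineSubspace ℝ (EuclideanSpace ℝ (Fin n)))
    (hE : (E : Set (EuclideanSpace ℝ (Fin n))).Nonempty) (A : Set (EuclideanSpace ℝ (Fin n)))
    (hA : OuterMeasure.mkMetric' (sphericalPre n (k + 1)) A ≠ ⊤) (ε : ℝ) (hε : 0 < ε) :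
    ∃ φ : ℝ → ℝ≥0∞, Measurable φ ∧
      volume (ball (0 : EuclideanSpace ℝ (Fin k)) 1) / 2 ^ k * ∫⁻ t, φ t
        ≤ volume (ball (0 : EuclideanSpace ℝ (Fin (k + 1))) 1) / 2 ^ (k + 1)
          * (OuterMeasure.mkMetric' (sphericalPre n (k + 1)) A + ENNReal.ofReal ε) ∧
      ∀ t L : ℝ, ε < t → 1 ≤ L → L ≤ 2 → t ≤ L ^ 2 * (t - ε) →
        OuterMeasure.mkMetric'.pre (sphericalPre n k) (ENNReal.ofReal (4 * ε))
          (A ∩ {y | infDist y (E : Set (EuclideanSpace ℝ (Fin n))) = t})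
          ≤ ENNReal.ofReal L ^ k * φ t := by
  have hε' : (0 : ℝ≥0∞) < ENNReal.ofReal ε := ENNReal.ofReal_pos.2 hε
  have hlt : OuterMeasure.mkMetric'.pre (sphericalPre n (k + 1)) (ENNReal.ofReal ε) A
      < OuterMeasure.mkMetric' (sphericalPre n (k + 1)) A + ENNReal.ofReal ε := by
    refine lt_of_le_of_lt ?_ (ENNReal.lt_add_right hA hε'.ne')
    exact (le_iSup₂ (f := fun (r : ℝ≥0∞) (_ : r > 0) =>
      OuterMeasure.mkMetric'.pre (sphericalPre n (k + 1)) r) (ENNReal.ofReal ε) hε') A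
  conv_lhs at hlt => rw [OuterMeasure.mkMetric'.pre, OuterMeasure.boundedBy_apply]
  simp only [iInf_lt_iff] at hlt
  obtain ⟨T, hAT, hT⟩ := hlt
  have hterm : ∀ i, (⨆ _ : (T i).Nonempty, extend (fun s (_ : ediam s ≤ ENNReal.ofReal ε) =>
      sphericalPre n (k + 1) s) (T i)) ≠ ⊤ := fun i =>
    ENNReal.ne_top_of_tsum_ne_top (hT.ne_top) i
  have hex : ∀ i, ∃ φ : ℝ → ℝ≥0∞, Measurable φ ∧
      volume (ball (0 : EuclideanSpace ℝ (Fin k)) 1) / 2 ^ k * ∫⁻ t, φ t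
        ≤ volume (ball (0 : EuclideanSpace ℝ (Fin (k + 1))) 1) / 2 ^ (k + 1)
          * (⨆ _ : (T i).Nonempty, extend (fun s (_ : ediam s ≤ ENNReal.ofReal ε) =>
              sphericalPre n (k + 1) s) (T i)) ∧
      ∀ t L : ℝ, ε < t → 1 ≤ L → L ≤ 2 → t ≤ L ^ 2 * (t - ε) →
        OuterMeasure.mkMetric'.pre (sphericalPre n k) (ENNReal.ofReal (4 * ε))
          (T i ∩ {y | infDist y (E : Set (EuclideanSpace ℝ (Fin n))) = t})
          ≤ ENNReal.ofReal L ^ k * φ t := by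
    intro i
    by_cases hne : (T i).Nonempty
    · have h := hterm i
      rw [iSup_pos hne] at h ⊢
      by_cases hd : ediam (T i) ≤ ENNReal.ofReal ε
      · rw [extend_eq (m := fun s (_ : ediam s ≤ ENNReal.ofReal ε) =>
              sphericalPre n (k + 1) s) hd] at h ⊢
        exact slice_one k E hE (T i) hne h ε hε hd
      · exact absurd (by simp [extend, hd]) h
    · refine ⟨0, measurable_zero, by simp, fun t L _ _ _ _ => ?_⟩
      rw [not_nonempty_iff_eq_empty.1 hne]
      simp
  choose φ hφm hφi hφs using hex
  refine ⟨fun t => ∑' i, φ i t, Measurable.tsum hφm, ?_, ?_⟩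
  · rw [lintegral_tsum (fun i => (hφm i).aemeasurable), ← ENNReal.tsum_mul_left]
    refine (ENNReal.tsum_le_tsum hφi).trans ?_
    rw [ENNReal.tsum_mul_left]
    gcongr
  · intro t L h1 h2 h3 h4
    rw [← ENNReal.tsum_mul_left]
    refine le_trans ?_ (ENNReal.tsum_le_tsum fun i => hφs i t L h1 h2 h3 h4)
    refine le_trans (measure_mono ?_) (measure_iUnion_le _)
    rw [← iUnion_inter]
    exact inter_subset_inter_left _ hAT

theorem slice_set {n : ℕ} [Nonempty (Fin n)] (k : ℕ)
    (E : AffineSubspace ℝ (EuclideanSpace ℝ (Fin n)))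
    (hE : (E : Set (EuclideanSpace ℝ (Fin n))).Nonempty) (A : Set (EuclideanSpace ℝ (Fin n)))
    (hA : OuterMeasure.mkMetric' (sphericalPre n (k + 1)) A ≠ ⊤) :
    ∃ φ : ℝ → ℝ≥0∞, Measurable φ ∧
      volume (ball (0 : EuclideanSpace ℝ (Fin k)) 1) / 2 ^ k * ∫⁻ t, φ t
        ≤ volume (ball (0 : EuclideanSpace ℝ (Fin (k + 1))) 1) / 2 ^ (k + 1)
          * OuterMeasure.mkMetric' (sphericalPre n (k + 1)) A ∧
      ∀ t : ℝ, 0 < t →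
        OuterMeasure.mkMetric' (sphericalPre n k)
          (A ∩ {y | infDist y (E : Set (EuclideanSpace ℝ (Fin n))) = t}) ≤ φ t := by
  have hε : ∀ j : ℕ, (0 : ℝ) < 1 / ((j : ℝ) + 1) := fun j => by positivity
  choose φ hφm hφi hφs using fun j : ℕ => slice_cover k E hE A hA (1 / ((j : ℝ) + 1)) (hε j)
  have hlim : Filter.Tendsto (fun j : ℕ => 1 / ((j : ℝ) + 1)) Filter.atTop (nhds 0) :=
    tendsto_one_div_add_atTop_nhds_zero_nat
  refine ⟨fun t => Filter.liminf (fun j => φ j t) Filter.atTop, Measurable.liminf hφm, ?_, ?_⟩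
  · have hc : volume (ball (0 : EuclideanSpace ℝ (Fin k)) 1) / 2 ^ k ≠ ⊤ :=
      ENNReal.div_ne_top measure_ball_lt_top.ne (by positivity)
    have hc' : volume (ball (0 : EuclideanSpace ℝ (Fin (k + 1))) 1) / 2 ^ (k + 1) ≠ ⊤ :=
      ENNReal.div_ne_top measure_ball_lt_top.ne (by positivity)
    have hc0 : volume (ball (0 : EuclideanSpace ℝ (Fin k)) 1) / 2 ^ k ≠ 0 :=
      (ENNReal.div_pos (measure_ball_pos _ _ one_pos).ne' (by finiteness)).ne'
    rw [mul_comm, ← ENNReal.le_div_iff_mul_le (Or.inl hc0) (Or.inl hc)]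
    refine (lintegral_liminf_le hφm).trans ?_
    have hT : Filter.Tendsto (fun j : ℕ =>
        volume (ball (0 : EuclideanSpace ℝ (Fin (k + 1))) 1) / 2 ^ (k + 1)
          * (OuterMeasure.mkMetric' (sphericalPre n (k + 1)) A
            + ENNReal.ofReal (1 / ((j : ℝ) + 1)))
          / (volume (ball (0 : EuclideanSpace ℝ (Fin k)) 1) / 2 ^ k)) Filter.atTop
        (nhds (volume (ball (0 : EuclideanSpace ℝ (Fin (k + 1))) 1) / 2 ^ (k + 1)
          * (OuterMeasure.mkMetric' (sphericalPre n (k + 1)) A + ENNReal.ofReal 0)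
          / (volume (ball (0 : EuclideanSpace ℝ (Fin k)) 1) / 2 ^ k))) := by
      refine ENNReal.Tendsto.div_const ?_ (Or.inr hc0)
      refine ENNReal.Tendsto.const_mul ?_ (Or.inr hc')
      exact (ENNReal.tendsto_ofReal hlim).const_add _
    rw [ENNReal.ofReal_zero, add_zero] at hT
    rw [← hT.liminf_eq]
    refine Filter.liminf_le_liminf (Filter.Eventually.of_forall fun j => ?_)
    rw [ENNReal.le_div_iff_mul_le (Or.inl hc0) (Or.inl hc), mul_comm]
    exact hφi j
  · intro t ht
    set D := A ∩ {y | infDist y (E : Set (EuclideanSpace ℝ (Fin n))) = t} with hD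
    set h := Filter.liminf (fun j => φ j t) Filter.atTop with hh
    have hL : ∀ L : ℝ, 1 < L → L ≤ 2 →
        OuterMeasure.mkMetric' (sphericalPre n k) D ≤ ENNReal.ofReal L ^ k * h := by
      intro L hL1 hL2
      rw [OuterMeasure.mkMetric']
      simp only [OuterMeasure.iSup_apply]
      refine iSup₂_le fun δ hδ => ?_
      have hL0 : ENNReal.ofReal L ^ k ≠ 0 := by
        have : 0 < ENNReal.ofReal L := ENNReal.ofReal_pos.2 (by linarith)
        positivity
      have hLt : ENNReal.ofReal L ^ k ≠ ⊤ := by finiteness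
      rw [mul_comm, ← ENNReal.div_le_iff_le_mul (Or.inl hL0) (Or.inl hLt)]
      refine Filter.le_liminf_of_le (by isBoundedDefault) ?_
      have e1 : ∀ᶠ j : ℕ in Filter.atTop, 1 / ((j : ℝ) + 1) < t :=
        hlim.eventually (gt_mem_nhds ht)
      have e2 : ∀ᶠ j : ℕ in Filter.atTop, t < L ^ 2 * (t - 1 / ((j : ℝ) + 1)) := by
        have : Filter.Tendsto (fun j : ℕ => L ^ 2 * (t - 1 / ((j : ℝ) + 1))) Filter.atTop
          (nhds (L ^ 2 * (t - 0))) := (hlim.const_sub t).const_mul _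
        refine this.eventually (lt_mem_nhds ?_)
        have hLL : 1 < L ^ 2 := one_lt_pow₀ hL1 (by norm_num)
        rw [sub_zero]
        exact lt_mul_of_one_lt_left ht hLL
      have e3 : ∀ᶠ j : ℕ in Filter.atTop, ENNReal.ofReal (4 * (1 / ((j : ℝ) + 1))) < δ := by
        have : Filter.Tendsto (fun j : ℕ => ENNReal.ofReal (4 * (1 / ((j : ℝ) + 1)))) Filter.atTop
          (nhds (ENNReal.ofReal (4 * 0))) := ENNReal.tendsto_ofReal (hlim.const_mul _)
        refine this.eventually (gt_mem_nhds ?_)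
        simpa using hδ
      filter_upwards [e1, e2, e3] with j h1 h2 h3
      rw [ENNReal.div_le_iff_le_mul (Or.inl hL0) (Or.inl hLt), mul_comm]
      exact (OuterMeasure.mkMetric'.mono_pre _ h3.le D).trans (hφs j t L h1 hL1.le hL2 h2.le)
    have hT : Filter.Tendsto (fun L : ℝ => ENNReal.ofReal L ^ k * h) (nhdsWithin 1 (Ioi 1))
        (nhds (ENNReal.ofReal 1 ^ k * h)) := by
      refine Filter.Tendsto.mono_left ?_ nhdsWithin_le_nhds
      refine ENNReal.Tendsto.mul_const ?_ (Or.inl (by simp))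
      exact ENNReal.Tendsto.pow (ENNReal.tendsto_ofReal Filter.tendsto_id)
    rw [ENNReal.ofReal_one, one_pow, one_mul] at hT
    refine ge_of_tendsto hT ?_
    filter_upwards [Ioc_mem_nhdsGT (show (1 : ℝ) < 2 by norm_num)] with L hL'
    exact hL L hL'.1 hL'.2

theorem sphericalMeasure_apply (n d : ℕ) (A : Set (EuclideanSpace ℝ (Fin n)))
    (hA : MeasurableSet A) :
    sphericalMeasure n d A = volume (ball (0 : EuclideanSpace ℝ (Fin d)) 1) / 2 ^ d *
      OuterMeasure.mkMetric' (sphericalPre n d) A := by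
  rw [sphericalMeasure, Measure.smul_apply, smul_eq_mul, Measure.mkMetric', toMeasure_apply _ _ hA]

theorem slice_measure {n : ℕ} [Nonempty (Fin n)] (k : ℕ)
    (E : AffineSubspace ℝ (EuclideanSpace ℝ (Fin n)))
    (hE : (E : Set (EuclideanSpace ℝ (Fin n))).Nonempty) (A : Set (EuclideanSpace ℝ (Fin n)))
    (hA : MeasurableSet A) :
    ∃ φ : ℝ → ℝ≥0∞, Measurable φ ∧ ∫⁻ t, φ t ≤ sphericalMeasure n (k + 1) A ∧
      ∀ t : ℝ, 0 < t → sphericalMeasure n k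
          (A ∩ {y | infDist y (E : Set (EuclideanSpace ℝ (Fin n))) = t}) ≤ φ t := by
  by_cases hfin : OuterMeasure.mkMetric' (sphericalPre n (k + 1)) A = ⊤
  · refine ⟨fun _ => ⊤, measurable_const, ?_, fun _ _ => le_top⟩
    have hc0 : volume (ball (0 : EuclideanSpace ℝ (Fin (k + 1))) 1) / 2 ^ (k + 1) ≠ 0 :=
      (ENNReal.div_pos (measure_ball_pos _ _ one_pos).ne' (by finiteness)).ne'
    rw [sphericalMeasure_apply _ _ _ hA, hfin, ENNReal.mul_top hc0]
    exact le_top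
  · obtain ⟨φ, hm, hi, hs⟩ := slice_set k E hE A hfin
    refine ⟨fun t => volume (ball (0 : EuclideanSpace ℝ (Fin k)) 1) / 2 ^ k * φ t,
      hm.const_mul _, ?_, fun t ht => ?_⟩
    · rw [lintegral_const_mul _ hm, sphericalMeasure_apply _ _ _ hA]
      exact hi
    · have hms : MeasurableSet (A ∩ {y | infDist y (E : Set (EuclideanSpace ℝ (Fin n))) = t}) :=
        hA.inter (measurable_infDist (measurableSet_singleton t))
      rw [sphericalMeasure_apply _ _ _ hms]
      exact mul_le_mul' le_rfl (hs t ht)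

theorem slice_fun {n : ℕ} [Nonempty (Fin n)] (k : ℕ)
    (E : AffineSubspace ℝ (EuclideanSpace ℝ (Fin n)))
    (hE : (E : Set (EuclideanSpace ℝ (Fin n))).Nonempty) (X : Set (EuclideanSpace ℝ (Fin n)))
    (hX : MeasurableSet X) (f : EuclideanSpace ℝ (Fin n) → ℝ≥0∞) (hf : Measurable f) :
    ∃ φ : ℝ → ℝ≥0∞, Measurable φ ∧ ∫⁻ t, φ t ≤ ∫⁻ q in X, f q ∂(sphericalMeasure n (k + 1)) ∧
      ∀ t : ℝ, 0 < t →
        ∫⁻ q in {x ∈ X | infDist x (E : Set (EuclideanSpace ℝ (Fin n))) = t}, f q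
          ∂(sphericalMeasure n k) ≤ φ t := by
  refine Measurable.ennreal_induction (motive := fun f => ∃ φ : ℝ → ℝ≥0∞, Measurable φ ∧
      ∫⁻ t, φ t ≤ ∫⁻ q in X, f q ∂(sphericalMeasure n (k + 1)) ∧
      ∀ t : ℝ, 0 < t →
        ∫⁻ q in {x ∈ X | infDist x (E : Set (EuclideanSpace ℝ (Fin n))) = t}, f q
          ∂(sphericalMeasure n k) ≤ φ t) ?_ ?_ ?_ hf
  · intro c s hs
    obtain ⟨φ, hm, hi, hφ⟩ := slice_measure k E hE (s ∩ X) (hs.inter hX)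
    refine ⟨fun t => c * φ t, hm.const_mul _, ?_, fun t ht => ?_⟩
    · rw [lintegral_const_mul _ hm, lintegral_indicator_const hs, Measure.restrict_apply hs]
      gcongr
    · rw [lintegral_indicator_const hs, Measure.restrict_apply hs]
      refine mul_le_mul' le_rfl (le_trans (measure_mono ?_) (hφ t ht))
      rintro x ⟨h1, h2, h3⟩
      exact ⟨⟨h1, h2⟩, h3⟩
  · intro f g _ hf hg ihf ihg
    obtain ⟨φ, hm, hi, hφ⟩ := ihf
    obtain ⟨ψ, hm', hi', hψ⟩ := ihg
    refine ⟨fun t => φ t + ψ t, hm.add hm', ?_, fun t ht => ?_⟩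
    · rw [lintegral_add_left hm]
      simp only [Pi.add_apply]
      rw [lintegral_add_left hf]
      gcongr
    · simp only [Pi.add_apply]
      rw [lintegral_add_left hf]
      exact add_le_add (hφ t ht) (hψ t ht)
  · intro f hf hmono ih
    choose φ hm hi hφ using ih
    refine ⟨fun t => Filter.liminf (fun j => φ j t) Filter.atTop, Measurable.liminf hm, ?_,
      fun t ht => ?_⟩
    · refine (lintegral_liminf_le hm).trans ?_
      rw [lintegral_iSup hf hmono]
      refine Filter.liminf_le_of_le (by isBoundedDefault) fun b hb => ?_
      obtain ⟨j, hj⟩ := hb.exists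
      exact hj.trans ((hi j).trans (le_iSup (fun j => ∫⁻ q in X, f j q ∂(sphericalMeasure n (k + 1))) j))
    · rw [lintegral_iSup hf hmono]
      refine iSup_le fun j => ?_
      refine Filter.le_liminf_of_le (by isBoundedDefault) ?_
      filter_upwards [Filter.eventually_ge_atTop j] with i hij
      exact (lintegral_mono (hmono hij)).trans (hφ i t ht)

/-- slicing (sharp Eilenberg) inequality for spherical measure.
If `X ⊆ ℝⁿ` is `𝒮^m`-measurable with `𝒮^m X < ∞` and `f` is measurable,
nonnegative and bounded, and `X_t` is the set of points of `X` at distance `t`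
from an `M`-dimensional affine subspace `E` (`0 ≤ M ≤ n−1`), then
`∫₀^∞ ∫_{X_t} f d𝒮^{m−1} dt ≤ ∫_X f d𝒮^m`. -/
theorem spherical_slicing_inequality (n m M : ℕ) (hm : 1 ≤ m) (hM : M ≤ n - 1)
    (X : Set (EuclideanSpace ℝ (Fin n)))
    (hX : MeasurableSet X) (hXfin : sphericalMeasure n m X < ⊤)
    (f : EuclideanSpace ℝ (Fin n) → ℝ) (hf : Measurable f)
    (hf0 : ∀ x, 0 ≤ f x) (B : ℝ) (hfB : ∀ x, f x ≤ B)
    (E : AffineSubspace ℝ (EuclideanSpace ℝ (Fin n))) (hE : (E : Set (EuclideanSpace ℝ (Fin n))).Nonempty)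
    (hEdim : Module.finrank ℝ E.direction = M) :
    ∫⁻ t in Set.Ioi (0 : ℝ),
        ∫⁻ q in {x ∈ X | Metric.infDist x (E : Set (EuclideanSpace ℝ (Fin n))) = t}, ENNReal.ofReal (f q)
          ∂(sphericalMeasure n (m - 1)) ∂volume
      ≤ ∫⁻ q in X, ENNReal.ofReal (f q) ∂(sphericalMeasure n m) := by
  obtain ⟨k, rfl⟩ : ∃ k, m = k + 1 := ⟨m - 1, by omega⟩
  rw [Nat.add_sub_cancel]
  rcases Nat.eq_zero_or_pos n with rfl | hn
  · have h0 : ∀ t ∈ Set.Ioi (0 : ℝ),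
        ∫⁻ q in {x ∈ X | Metric.infDist x (E : Set (EuclideanSpace ℝ (Fin 0))) = t},
          ENNReal.ofReal (f q) ∂(sphericalMeasure 0 k) = 0 := by
      intro t ht
      have : {x ∈ X | Metric.infDist x (E : Set (EuclideanSpace ℝ (Fin 0))) = t} = ∅ := by
        ext x
        simp only [mem_ofPred_eq, mem_empty_iff_false, iff_false, not_and]
        rintro _ rfl
        obtain ⟨e, he⟩ := hE
        rw [Subsingleton.elim x e, infDist_zero_of_mem he] at ht
        exact lt_irrefl _ (mem_Ioi.1 ht)
      rw [this]
      simp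
    rw [setLIntegral_congr_fun measurableSet_Ioi h0]
    simp
  · have : Nonempty (Fin n) := ⟨⟨0, hn⟩⟩
    obtain ⟨φ, _, hi, hφ⟩ := slice_fun k E hE X hX (fun q => ENNReal.ofReal (f q)) hf.ennreal_ofReal
    refine le_trans ?_ hi
    refine le_trans ?_ (setLIntegral_le_lintegral (Set.Ioi (0 : ℝ)) φ)
    exact setLIntegral_mono' measurableSet_Ioi fun t ht => hφ t ht
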